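/- For a collection 𝒮 of finite subsets of ℤ, the set of graded ideals {Cx_I : I ∈ 𝒮} generates the category of ℤ_fin-graded C-modules if and only if ⋂_{I∈𝒮} I = ∅ and ⋃_{I∈𝒮} I = ℤ. -/

import Mathlib

open scoped symmDiff

noncomputable section

/-- The ring `C = k[x_n : n ∈ ℤ] / (x_n² + n = x_m² + m)`. -/
abbrev WeylC (k : Type) [Field k] : Type :=
  MvPolynomial ℤ k ⧸ Ideal.span { p : MvPolynomial ℤ k |
    ∃ m n : ℤ, p = MvPolynomial.X n ^ 2 + (n : MvPolynomial ℤ k)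
      - MvPolynomial.X m ^ 2 - (m : MvPolynomial ℤ k) }

variable (k : Type) [Field k]

/-- The generator `x_n` of `C`. -/
def xC (n : ℤ) : WeylC k := Ideal.Quotient.mk _ (MvPolynomial.X n)

/-- `x_I := ∏_{i ∈ I} x_i` for a finite subset `I ⊆ ℤ` (with `x_∅ = 1`). -/
def xS (I : Finset ℤ) : WeylC k := ∏ i ∈ I, xC k i

/-- The identity component `C_∅ = k[x_0²]`. -/
def Cphi : Subalgebra k (WeylC k) := Algebra.adjoin k {xC k 0 ^ 2}

/-- The homogeneous component `C_I = C_∅ · x_I` of the `ℤ_fin`-grading on `C`. -/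
def Cgrade (I : Finset ℤ) : Submodule k (WeylC k) :=
  (Cphi k).toSubmodule.map (LinearMap.mulRight k (xS k I))

/-- The graded ideal `Cx_I` generated by `x_I`. -/
def Cx (I : Finset ℤ) : Ideal (WeylC k) := Ideal.span {xS k I}

variable [CharZero k]

/-!
Since `C_I = C_∅ x_I`, the module `Cx_K` is a graded quotient of a finite sum of modules `Cx_I`,
`I ∈ 𝒮`, iff it is generated by homogeneous elements with degrees in `𝒮`. We show that this happens
iff every integer `m` has some `I ∈ 𝒮` with `m ∈ I ↔ m ∈ K`; the theorem follows by letting `K`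
vary.

Sufficiency: `x_{I ∆ K} x_K` is homogeneous of degree `I`, so it is enough that the `x_{I ∆ K}`
generate the unit ideal. As `x_m² - x_n² = n - m` is invertible for `m ≠ n`, a maximal ideal
contains at most one `x_m`, and some `I ∆ K` avoids that `m`.

Necessity: suppose that `n` lies in exactly one of `I` and `K` for every `I ∈ 𝒮`. Over an
algebraic closure of `k`, `C` has a tangent vector at a point with `x_n = 0`: a homomorphism to the
dual numbers sending `x_n` to `ε` and every other `x_m` to a nonzero constant. It sends `C_∅` to
constants, so it kills the homogeneous elements of `Cx_K` with degree in `𝒮` (if `n ∈ K`) or sends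
them to multiples of `ε` (if `n ∉ K`), whereas `x_K` goes to a unit multiple of `ε` or to a unit.
-/

section General

lemma forall_exists_mem_iff_mem_iff {α : Type*} (𝒮 : Set (Finset α)) :
    (∀ (K : Finset α) (m : α), ∃ I ∈ 𝒮, (m ∈ I ↔ m ∈ K)) ↔
      ((⋂ I ∈ 𝒮, (I : Set α)) = ∅ ∧ (⋃ I ∈ 𝒮, (I : Set α)) = Set.univ) := by
  simp only [Set.eq_empty_iff_forall_notMem, Set.eq_univ_iff_forall, Set.mem_iInter₂,
    Set.mem_iUnion₂, Finset.mem_coe, exists_prop, not_forall]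
  refine ⟨fun h ↦ ⟨fun m ↦ by simpa using h ∅ m, fun m ↦ by simpa using h {m} m⟩, ?_⟩
  rintro ⟨exists_notMem, exists_mem⟩ K m
  by_cases hm : m ∈ K
  · simpa only [hm, iff_true] using exists_mem m
  · simpa only [hm, iff_false] using exists_notMem m

lemma prod_symmDiff_mul_prod {ι M : Type*} [DecidableEq ι] [CommMonoid M] (x : ι → M)
    (I K : Finset ι) :
    (∏ i ∈ I ∆ K, x i) * ∏ i ∈ K, x i = (∏ i ∈ K \ I, x i ^ 2) * ∏ i ∈ I, x i := by
  have hsymm : ∏ i ∈ I ∆ K, x i = (∏ i ∈ I \ K, x i) * ∏ i ∈ K \ I, x i :=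
    Finset.prod_union disjoint_sdiff_sdiff
  rw [hsymm, ← Finset.prod_inter_mul_prod_sdiff I K x, ← Finset.prod_inter_mul_prod_sdiff K I x,
    Finset.inter_comm K I, Finset.prod_pow, sq]
  ac_rfl

lemma span_image_prod_eq_top {ι A : Type*} [CommSemiring A] {x : ι → A}
    (hx : Pairwise (Function.onFun IsCoprime x)) {𝒯 : Set (Finset ι)} (hne : 𝒯.Nonempty)
    (h𝒯 : ∀ i, ∃ T ∈ 𝒯, i ∉ T) :
    Ideal.span ((fun T ↦ ∏ i ∈ T, x i) '' 𝒯) = ⊤ := by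
  by_contra hproper
  obtain ⟨M, hM, hle⟩ := Ideal.exists_le_maximal _ hproper
  have exists_mem : ∀ T ∈ 𝒯, ∃ i ∈ T, x i ∈ M := fun T hT ↦
    hM.isPrime.prod_mem_iff.1 (hle (Ideal.subset_span (Set.mem_image_of_mem _ hT)))
  obtain ⟨T₀, hT₀⟩ := hne
  obtain ⟨i, -, hi⟩ := exists_mem T₀ hT₀
  obtain ⟨T, hT, hiT⟩ := h𝒯 i
  obtain ⟨j, hjT, hj⟩ := exists_mem T hT
  have hij : i ≠ j := fun h ↦ hiT (h ▸ hjT)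
  obtain ⟨a, b, hab⟩ := hx hij
  exact (Ideal.ne_top_iff_one M).1 hM.ne_top
    (hab ▸ M.add_mem (M.mul_mem_left a hi) (M.mul_mem_left b hj))

end General

namespace WeylC

variable {k}

section Grading

omit [CharZero k]

lemma xC_sq_add (m n : ℤ) : xC k n ^ 2 + (n : WeylC k) = xC k m ^ 2 + (m : WeylC k) := by
  have hrel := Ideal.Quotient.eq_zero_iff_mem.2 (Ideal.subset_span (s := {p : MvPolynomial ℤ k |
    ∃ m n : ℤ, p = MvPolynomial.X n ^ 2 + (n : MvPolynomial ℤ k)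
      - MvPolynomial.X m ^ 2 - (m : MvPolynomial ℤ k)}) ⟨m, n, rfl⟩)
  simp only [map_sub, map_add, map_pow, map_intCast] at hrel
  unfold xC
  linear_combination hrel

lemma xC_sq_mem_Cphi (n : ℤ) : xC k n ^ 2 ∈ Cphi k := by
  have hn : xC k n ^ 2 = xC k 0 ^ 2 - (n : WeylC k) := by
    simpa [eq_sub_iff_add_eq] using xC_sq_add (k := k) 0 n
  rw [hn]
  exact sub_mem (Algebra.self_mem_adjoin_singleton k _) (intCast_mem _ n)

lemma mem_Cgrade {I : Finset ℤ} {y : WeylC k} :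
    y ∈ Cgrade k I ↔ ∃ a ∈ Cphi k, a * xS k I = y :=
  Iff.rfl

lemma mul_mem_Cgrade {I : Finset ℤ} {a y : WeylC k} (ha : a ∈ Cphi k) (hy : y ∈ Cgrade k I) :
    a * y ∈ Cgrade k I := by
  obtain ⟨b, hb, rfl⟩ := mem_Cgrade.1 hy
  exact mem_Cgrade.2 ⟨a * b, mul_mem ha hb, mul_assoc _ _ _⟩

lemma xS_mem_Cgrade (I : Finset ℤ) : xS k I ∈ Cgrade k I :=
  mem_Cgrade.2 ⟨1, one_mem _, one_mul _⟩

lemma mem_Cx {I : Finset ℤ} {y : WeylC k} : y ∈ Cx k I ↔ ∃ r, r * xS k I = y :=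
  Ideal.mem_span_singleton'

end Grading

section GradedQuotient

omit [CharZero k]

variable (k) in
/-- `Cx_K` is a graded quotient of a finite direct sum of modules `Cx_I` with `I ∈ 𝒮`. -/
def IsGradedQuotient (𝒮 : Set (Finset ℤ)) (K : Finset ℤ) : Prop :=
  ∃ (n : ℕ) (c : Fin n → Finset ℤ), (∀ i, c i ∈ 𝒮) ∧
    ∃ f : (∀ i : Fin n, ↥(Cx k (c i))) →ₗ[WeylC k] ↥(Cx k K),
      Function.Surjective f ∧
      ∀ (L : Finset ℤ) (p : ∀ i : Fin n, ↥(Cx k (c i))),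
        (∀ i, ((p i : WeylC k) ∈ Cgrade k L)) → (f p : WeylC k) ∈ Cgrade k L

variable (k) in
/-- The homogeneous elements of `Cx_K` whose degree lies in `𝒮`. -/
def homogeneousElements (𝒮 : Set (Finset ℤ)) (K : Finset ℤ) : Set (WeylC k) :=
  {y | y ∈ Cx k K ∧ ∃ I ∈ 𝒮, y ∈ Cgrade k I}

variable (k) in
/-- The generator `x_I` of `Cx_I`, as an element of this module. -/
def gen (I : Finset ℤ) : Cx k I :=
  ⟨xS k I, Ideal.mem_span_singleton_self _⟩

lemma exists_smul_gen_eq {I : Finset ℤ} (p : Cx k I) : ∃ r : WeylC k, r • gen k I = p :=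
  (mem_Cx.1 p.2).imp fun _ hr ↦ Subtype.ext hr

lemma IsGradedQuotient.xS_mem_span {𝒮 : Set (Finset ℤ)} {K : Finset ℤ}
    (h : IsGradedQuotient k 𝒮 K) : xS k K ∈ Ideal.span (homogeneousElements k 𝒮 K) := by
  obtain ⟨n, c, hc, f, hsurj, hgraded⟩ := h
  have hgen (i : Fin n) :
      (f (Pi.single i (gen k (c i))) : WeylC k) ∈ homogeneousElements k 𝒮 K := by
    refine ⟨Subtype.coe_prop _, c i, hc i, hgraded _ _ fun j ↦ ?_⟩
    obtain rfl | hji := eq_or_ne j i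
    · rw [Pi.single_eq_same]
      exact xS_mem_Cgrade _
    · rw [Pi.single_eq_of_ne hji]
      exact zero_mem _
  obtain ⟨p, hp⟩ := hsurj (gen k K)
  have hsum : xS k K = ∑ i, (f (Pi.single i (p i)) : WeylC k) := by
    rw [← Submodule.coe_sum, ← map_sum, Finset.univ_sum_single, hp, gen]
  rw [hsum]
  refine sum_mem fun i _ ↦ ?_
  obtain ⟨r, hr⟩ := exists_smul_gen_eq (p i)
  have hsingle : (Pi.single i (p i) : ∀ j, Cx k (c j)) = r • Pi.single i (gen k (c i)) := by
    rw [← hr]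
    exact Pi.single_smul (f := fun j ↦ ↥(Cx k (c j))) i r _
  rw [hsingle, map_smul]
  exact Ideal.mul_mem_left _ r (Ideal.subset_span (hgen i))

lemma mul_mem_Cx_of_mul_xS_mem {I K : Finset ℤ} {a : WeylC k} (ha : a * xS k I ∈ Cx k K) :
    ∀ p ∈ Cx k I, a * p ∈ Cx k K := by
  intro p hp
  obtain ⟨q, rfl⟩ := mem_Cx.1 hp
  rw [mul_left_comm]
  exact Ideal.mul_mem_left _ q ha

lemma IsGradedQuotient.of_xS_mem_span {𝒮 : Set (Finset ℤ)} {K : Finset ℤ}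
    (h : xS k K ∈ Ideal.span (homogeneousElements k 𝒮 K)) : IsGradedQuotient k 𝒮 K := by
  obtain ⟨n, r, y, hsum⟩ := Submodule.mem_span_set'.1 h
  choose hyK c hc hyc using fun i ↦ (y i).2
  choose a haphi hay using fun i ↦ mem_Cgrade.1 (hyc i)
  let f : (∀ i, Cx k (c i)) →ₗ[WeylC k] Cx k K :=
    ∑ i, (LinearMap.mulLeft (WeylC k) (a i)).restrict
      (mul_mem_Cx_of_mul_xS_mem (hay i ▸ hyK i)) ∘ₗ LinearMap.proj i
  have coe_f (p : ∀ i, Cx k (c i)) : (f p : WeylC k) = ∑ i, a i * (p i : WeylC k) := by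
    simp only [f, LinearMap.sum_apply, Submodule.coe_sum]
    rfl
  have f_gen : f (fun i ↦ r i • gen k (c i)) = gen k K := by
    refine Subtype.ext ((coe_f _).trans (Eq.trans ?_ hsum))
    refine Finset.sum_congr rfl fun i _ ↦ ?_
    rw [← hay, smul_eq_mul, Submodule.coe_smul, smul_eq_mul, gen, mul_left_comm]
  refine ⟨n, c, hc, f, fun z ↦ ?_, fun L p hp ↦ ?_⟩
  · obtain ⟨q, rfl⟩ := exists_smul_gen_eq z
    exact ⟨q • fun i ↦ r i • gen k (c i), by rw [map_smul, f_gen]⟩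
  · rw [coe_f]
    exact sum_mem fun i _ ↦ mul_mem_Cgrade (haphi i) (hp i)

lemma isGradedQuotient_iff_xS_mem_span {𝒮 : Set (Finset ℤ)} {K : Finset ℤ} :
    IsGradedQuotient k 𝒮 K ↔ xS k K ∈ Ideal.span (homogeneousElements k 𝒮 K) :=
  ⟨IsGradedQuotient.xS_mem_span, IsGradedQuotient.of_xS_mem_span⟩

end GradedQuotient

section Sufficiency

lemma pairwise_isCoprime_xC : Pairwise (Function.onFun IsCoprime (xC k)) := by
  intro m n hmn
  have hdiff : xC k m ^ 2 - xC k n ^ 2 = algebraMap k (WeylC k) (n - m) := by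
    rw [map_sub, map_intCast, map_intCast]
    linear_combination xC_sq_add (k := k) n m
  have hinv : algebraMap k (WeylC k) (n - m : k)⁻¹ * (xC k m ^ 2 - xC k n ^ 2) = 1 := by
    rw [hdiff, ← map_mul, inv_mul_cancel₀ (sub_ne_zero.2 (Int.cast_injective.ne hmn.symm)),
      map_one]
  refine ⟨algebraMap k _ (n - m : k)⁻¹ * xC k m, -algebraMap k _ (n - m : k)⁻¹ * xC k n, ?_⟩
  linear_combination hinv

omit [CharZero k] in
lemma xS_symmDiff_mul_xS_mem_homogeneousElements {𝒮 : Set (Finset ℤ)} {I : Finset ℤ} (hI : I ∈ 𝒮)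
    (K : Finset ℤ) : xS k (I ∆ K) * xS k K ∈ homogeneousElements k 𝒮 K := by
  refine ⟨mem_Cx.2 ⟨_, rfl⟩, I, hI, mem_Cgrade.2 ⟨∏ i ∈ K \ I, xC k i ^ 2, ?_, ?_⟩⟩
  · exact prod_mem fun i _ ↦ xC_sq_mem_Cphi i
  · exact (prod_symmDiff_mul_prod (xC k) I K).symm

lemma xS_mem_span_homogeneousElements {𝒮 : Set (Finset ℤ)} {K : Finset ℤ}
    (h : ∀ m, ∃ I ∈ 𝒮, (m ∈ I ↔ m ∈ K)) :
    xS k K ∈ Ideal.span (homogeneousElements k 𝒮 K) := by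
  have htop : Ideal.span (xS k '' ((· ∆ K) '' 𝒮)) = ⊤ := by
    refine span_image_prod_eq_top pairwise_isCoprime_xC ?_ fun m ↦ ?_
    · obtain ⟨I, hI, -⟩ := h 0
      exact ⟨_, Set.mem_image_of_mem _ hI⟩
    · obtain ⟨I, hI, hm⟩ := h m
      exact ⟨_, Set.mem_image_of_mem _ hI, by simp [Finset.mem_symmDiff, hm]⟩
  have hle : Ideal.span (xS k '' ((· ∆ K) '' 𝒮)) ≤
      (Ideal.span (homogeneousElements k 𝒮 K)).colon {xS k K} := by
    rw [Ideal.span_le]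
    rintro _ ⟨_, ⟨I, hI, rfl⟩, rfl⟩
    exact Submodule.mem_colon_singleton.2
      (Ideal.subset_span (xS_symmDiff_mul_xS_mem_homogeneousElements hI K))
  have hone := hle (htop ▸ Submodule.mem_top (x := 1))
  simpa using Submodule.mem_colon_singleton.1 hone

end Sufficiency

section Necessity

omit [CharZero k]

variable {A : Type*} [CommRing A] [Algebra k A]

/-- The homomorphism out of `C` sending `x_m` to `v m`, given by the universal property of `C`. -/
def lift (v : ℤ → A) (hv : ∀ m n : ℤ, v n ^ 2 + n = v m ^ 2 + m) : WeylC k →ₐ[k] A :=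
  Ideal.Quotient.liftₐ _ (MvPolynomial.aeval v) fun p hp ↦ by
    refine (Ideal.span_le (I := RingHom.ker (MvPolynomial.aeval (R := k) v))).2 ?_ hp
    rintro _ ⟨m, n, rfl⟩
    simp only [SetLike.mem_coe, RingHom.mem_ker, map_sub, map_add, map_pow, map_intCast,
      MvPolynomial.aeval_X]
    linear_combination hv m n

@[simp]
lemma lift_xC (v : ℤ → A) (hv : ∀ m n : ℤ, v n ^ 2 + n = v m ^ 2 + m) (m : ℤ) :
    lift (k := k) v hv (xC k m) = v m :=
  MvPolynomial.aeval_X v m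

variable {n : ℤ} {s : ℤ → A} (hs : ∀ m, s m ^ 2 = n - m)

include hs in
lemma update_eps_sq_add (m : ℤ) :
    Function.update (fun m ↦ (TrivSqZeroExt.inl (s m) : DualNumber A)) n DualNumber.eps m ^ 2 + m
      = n := by
  obtain rfl | hmn := eq_or_ne m n
  · simp [sq]
  · rw [Function.update_of_ne hmn, TrivSqZeroExt.inl_pow, hs, TrivSqZeroExt.inl_sub,
      TrivSqZeroExt.inl_intCast, TrivSqZeroExt.inl_intCast, sub_add_cancel]

variable (k) in
/-- The tangent vector in the direction of `x_n` at the `A`-point of the spectrum of `C` with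
`x_n = 0` and `x_m = s m` for `m ≠ n`, encoded as a homomorphism to the dual numbers. -/
def tangentVector : WeylC k →ₐ[k] DualNumber A :=
  lift (Function.update (fun m ↦ TrivSqZeroExt.inl (s m)) n DualNumber.eps) fun m m' ↦
    (update_eps_sq_add hs m').trans (update_eps_sq_add hs m).symm

lemma tangentVector_xC_self : tangentVector k hs (xC k n) = DualNumber.eps := by
  simp [tangentVector]

lemma tangentVector_xC_of_ne {m : ℤ} (hm : m ≠ n) :
    tangentVector k hs (xC k m) = TrivSqZeroExt.inl (s m) := by
  simp [tangentVector, hm]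

lemma exists_tangentVector_eq_algebraMap {a : WeylC k} (ha : a ∈ Cphi k) :
    ∃ t : k, tangentVector k hs a = algebraMap k _ t := by
  have hle : Cphi k ≤ (⊥ : Subalgebra k (DualNumber A)).comap (tangentVector k hs) := by
    refine Algebra.adjoin_le (Set.singleton_subset_iff.2 ?_)
    have hsq : tangentVector k hs (xC k 0 ^ 2) = n := by
      simpa [tangentVector] using update_eps_sq_add hs 0
    simp only [Subalgebra.coe_comap, Set.mem_preimage, hsq, SetLike.mem_coe, intCast_mem]
  exact (Algebra.mem_bot.1 (hle ha)).imp fun _ ↦ Eq.symm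

lemma exists_tangentVector_eq_smul {I : Finset ℤ} {y : WeylC k} (hy : y ∈ Cgrade k I) :
    ∃ t : k, tangentVector k hs y = t • tangentVector k hs (xS k I) := by
  obtain ⟨a, ha, rfl⟩ := mem_Cgrade.1 hy
  obtain ⟨t, ht⟩ := exists_tangentVector_eq_algebraMap hs ha
  exact ⟨t, by rw [map_mul, ht, Algebra.smul_def]⟩

lemma fst_tangentVector_xS (I : Finset ℤ) :
    (tangentVector k hs (xS k I)).fst = ∏ m ∈ I, (tangentVector k hs (xC k m)).fst := by
  rw [xS, map_prod]
  exact map_prod (TrivSqZeroExt.fstHom A A A) _ I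

variable [IsDomain A] [CharZero A]

lemma fst_tangentVector_xC_eq_zero_iff {m : ℤ} :
    (tangentVector k hs (xC k m)).fst = 0 ↔ m = n := by
  obtain rfl | hmn := eq_or_ne m n
  · simp [tangentVector_xC_self]
  · rw [tangentVector_xC_of_ne hs hmn, TrivSqZeroExt.fst_inl, ← sq_eq_zero_iff, hs, sub_eq_zero,
      Int.cast_inj, eq_comm]

lemma fst_tangentVector_xS_eq_zero_iff {I : Finset ℤ} :
    (tangentVector k hs (xS k I)).fst = 0 ↔ n ∈ I := by
  simp [fst_tangentVector_xS, Finset.prod_eq_zero_iff, fst_tangentVector_xC_eq_zero_iff]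

lemma tangentVector_xS_ne_zero (I : Finset ℤ) : tangentVector k hs (xS k I) ≠ 0 := by
  intro hzero
  have hn : n ∈ I := (fst_tangentVector_xS_eq_zero_iff hs).1 (by rw [hzero, TrivSqZeroExt.fst_zero])
  have hfactor : xS k I = xC k n * xS k (I.erase n) := (Finset.mul_prod_erase I _ hn).symm
  have hsnd : (tangentVector k hs (xS k I)).snd = (tangentVector k hs (xS k (I.erase n))).fst := by
    simp [hfactor, tangentVector_xC_self]
  rw [hzero, TrivSqZeroExt.snd_zero, eq_comm, fst_tangentVector_xS_eq_zero_iff] at hsnd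
  exact Finset.notMem_erase n I hsnd

lemma fst_tangentVector_eq_zero_of_mem_Cx {K : Finset ℤ} (hn : n ∈ K) {y : WeylC k}
    (hy : y ∈ Cx k K) : (tangentVector k hs y).fst = 0 := by
  obtain ⟨r, rfl⟩ := mem_Cx.1 hy
  rw [map_mul, TrivSqZeroExt.fst_mul, (fst_tangentVector_xS_eq_zero_iff hs).2 hn, mul_zero]

lemma fst_tangentVector_eq_zero_of_mem_Cgrade {I : Finset ℤ} (hn : n ∈ I) {y : WeylC k}
    (hy : y ∈ Cgrade k I) : (tangentVector k hs y).fst = 0 := by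
  obtain ⟨a, -, rfl⟩ := mem_Cgrade.1 hy
  exact fst_tangentVector_eq_zero_of_mem_Cx hs hn (mem_Cx.2 ⟨a, rfl⟩)

lemma tangentVector_eq_zero_of_mem_Cgrade {I : Finset ℤ} (hn : n ∉ I) {y : WeylC k}
    (hy : y ∈ Cgrade k I) (hfst : (tangentVector k hs y).fst = 0) : tangentVector k hs y = 0 := by
  obtain ⟨t, ht⟩ := exists_tangentVector_eq_smul hs hy
  rw [ht, TrivSqZeroExt.fst_smul, smul_eq_zero, fst_tangentVector_xS_eq_zero_iff] at hfst
  rw [ht, hfst.resolve_right hn, zero_smul]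

include hs in
lemma exists_mem_iff_mem_of_xS_mem_span {𝒮 : Set (Finset ℤ)} {K : Finset ℤ}
    (h : xS k K ∈ Ideal.span (homogeneousElements k 𝒮 K)) : ∃ I ∈ 𝒮, (n ∈ I ↔ n ∈ K) := by
  by_contra! hne
  by_cases hn : n ∈ K
  · have hle : Ideal.span (homogeneousElements k 𝒮 K) ≤ RingHom.ker (tangentVector k hs) := by
      rw [Ideal.span_le]
      rintro y ⟨hyK, I, hI, hyI⟩
      have hnI : n ∉ I := by simpa [hn] using hne I hI
      exact tangentVector_eq_zero_of_mem_Cgrade hs hnI hyI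
        (fst_tangentVector_eq_zero_of_mem_Cx hs hn hyK)
    exact tangentVector_xS_ne_zero hs K (hle h)
  · have hle : Ideal.span (homogeneousElements k 𝒮 K) ≤
        RingHom.ker ((TrivSqZeroExt.fstHom k A A).comp (tangentVector k hs)) := by
      rw [Ideal.span_le]
      rintro y ⟨-, I, hI, hyI⟩
      have hnI : n ∈ I := by simpa [hn] using hne I hI
      exact fst_tangentVector_eq_zero_of_mem_Cgrade hs hnI hyI
    exact hn ((fst_tangentVector_xS_eq_zero_iff hs).1 (hle h))

end Necessity

theorem isGradedQuotient_iff {𝒮 : Set (Finset ℤ)} {K : Finset ℤ} :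
    IsGradedQuotient k 𝒮 K ↔ ∀ m, ∃ I ∈ 𝒮, (m ∈ I ↔ m ∈ K) := by
  rw [isGradedQuotient_iff_xS_mem_span]
  refine ⟨fun h n ↦ ?_, xS_mem_span_homogeneousElements⟩
  choose s hs using fun m : ℤ ↦ IsAlgClosed.exists_pow_nat_eq (n - m : AlgebraicClosure k) two_pos
  exact exists_mem_iff_mem_of_xS_mem_span hs h

end WeylC

set_option synthInstance.maxHeartbeats 1000000 in
set_option maxHeartbeats 1000000 in
/-- For a collection `𝒮` of finite subsets of `ℤ`, the graded
ideals `{Cx_I : I ∈ 𝒮}` generate the category of `ℤ_fin`-graded `C`-modules —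
equivalently, every `Cx_K` is a quotient (by a surjective degree-preserving
`C`-module map) of a finite direct sum of modules `Cx_I` with `I ∈ 𝒮` —
if and only if `⋂_{I∈𝒮} I = ∅` and `⋃_{I∈𝒮} I = ℤ`. -/
theorem cx_generates_iff (𝒮 : Set (Finset ℤ)) :
    (∀ K : Finset ℤ, ∃ (n : ℕ) (c : Fin n → Finset ℤ), (∀ i, c i ∈ 𝒮) ∧
      ∃ f : (∀ i : Fin n, ↥(Cx k (c i))) →ₗ[WeylC k] ↥(Cx k K),
        Function.Surjective f ∧
        ∀ (L : Finset ℤ) (p : ∀ i : Fin n, ↥(Cx k (c i))),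
          (∀ i, ((p i : WeylC k) ∈ Cgrade k L)) → (f p : WeylC k) ∈ Cgrade k L) ↔
    ((⋂ I ∈ 𝒮, (I : Set ℤ)) = ∅ ∧ (⋃ I ∈ 𝒮, (I : Set ℤ)) = Set.univ) := by
  rw [← forall_exists_mem_iff_mem_iff]
  exact forall_congr' fun K ↦ WeylC.isGradedQuotient_iff
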